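/- arXiv:2302.00555 — 3 statements merged into one kernel-verified Lean document; each statement's English description precedes it below -/
import Mathlib

section
/- Let v_1 := s_{4n+2}·τ_{4n−1}·τ_{4n−3}·⋯·τ_3·τ_1 (the product of the τ_{2i−1} for i running from 2n down to 1, premultiplied by s_{4n+2}). Then v_1(j) = 2j for 1 ≤ j ≤ 2n, v_1(2n+1) = 4n+3, v_1(2n+2) = 4n+4, v_1(j) = 2j for 2n+3 ≤ j ≤ 4n+2, and v_1(8n+5−j) = 8n+5 − v_1(j) for all 1 ≤ j ≤ 4n+2; that is, v_1 has one-line notation (2,4,6,…,4n−2,4n,4n+3,4n+4,4n+6,4n+8,…,8n+4, followed by the mirror-determined values). -/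
/-!
Every simple reflection commutes with the mirror `x ↦ 8n+5-x`, so all products are determined by
their values on the lower half `1, …, 4n+2` (`MirrorSymm`). There, `s_a s_{a+1} ⋯ s_{a+m-1}` is the
cycle raising `a, …, a+m-1` by one and sending `a+m` to `a` (`word_apply`).

The values of the partial products `τ_{2k-1} ⋯ τ_3 τ_1` are then tracked by induction on `k`
(`partialValue`). The value at a position `j` starts at `j` and grows by one at each step, until one
of two things happens. If `j ≤ k`, it was left below the range `≥ 2k+1` still moved, and stays at
`2j`. If `j + k ≥ 4n+3`, it has crossed the middle, has been sent to the mirror of `2i-1` with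
`i = 4n+3-j`, which is again `2j`, and stays there. The alternation between `s_{4n+1}` and
`s_{4n+2}` decides whether the position about to cross shows `4n+2` or `4n+3`. At `k = 2n` this
gives `2j` at every position `j ≤ 4n+2` except `4n+1, 4n+2` at positions `2n+1, 2n+2`, and
`s_{4n+2}` turns those two into `4n+3, 4n+4`.
-/

/-- `σ` preserves `{1, …, 8n+4}` and commutes there with the mirror `x ↦ 8n+5-x`. -/
def MirrorSymm (n : ℕ) (σ : Equiv.Perm ℕ) : Prop :=
  ∀ x, 1 ≤ x → x ≤ 8*n+4 → 1 ≤ σ x ∧ σ x ≤ 8*n+4 ∧ σ (8*n+5-x) = 8*n+5 - σ x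

lemma MirrorSymm.mul {n : ℕ} {σ ρ : Equiv.Perm ℕ} (hσ : MirrorSymm n σ) (hρ : MirrorSymm n ρ) :
    MirrorSymm n (σ * ρ) := by
  intro x h1 h2
  obtain ⟨a, b, c⟩ := hρ x h1 h2
  obtain ⟨d, e, f⟩ := hσ (ρ x) a b
  simp only [Equiv.Perm.mul_apply]
  exact ⟨d, e, by rw [c, f]⟩

lemma MirrorSymm.prod {n : ℕ} (l : List (Equiv.Perm ℕ)) (h : ∀ σ ∈ l, MirrorSymm n σ) :
    MirrorSymm n l.prod := by
  induction l with
  | nil => intro x h1 h2; simp; omega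
  | cons a l ih =>
    rw [List.prod_cons]
    exact (h a (by simp)).mul (ih fun σ hσ => h σ (by simp [hσ]))

lemma mirrorSymm_reflection {n i : ℕ} (h1 : 1 ≤ i) (h2 : i ≤ 4*n+1) :
    MirrorSymm n (Equiv.swap i (i+1) * Equiv.swap (8*n+4-i) (8*n+5-i)) := by
  intro x hx1 hx2
  simp only [Equiv.Perm.mul_apply, Equiv.swap_apply_def]
  grind

lemma mirrorSymm_last (n : ℕ) :
    MirrorSymm n (Equiv.swap (4*n+1) (4*n+3) * Equiv.swap (4*n+2) (4*n+4)) := by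
  intro x hx1 hx2
  simp only [Equiv.Perm.mul_apply, Equiv.swap_apply_def]
  grind

/-- On the lower half, `s_a s_{a+1} ⋯ s_{a+m-1}` is a cycle of `a, …, a+m`. -/
lemma word_apply {n : ℕ} {s : ℕ → Equiv.Perm ℕ}
    (hs : ∀ i, 1 ≤ i → i ≤ 4*n+1 →
      s i = Equiv.swap i (i+1) * Equiv.swap (8*n+4-i) (8*n+5-i))
    (m a x : ℕ) (ha : 1 ≤ a) (hm : a + m ≤ 4*n+1) (hx : x ≤ 4*n+2) :
    ((List.range' a m).map s).prod x =
      if x = a + m then a else if a ≤ x ∧ x < a + m then x + 1 else x := by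
  induction m generalizing a with
  | zero => simp; grind
  | succ m ih =>
    rw [List.range'_succ, List.map_cons, List.prod_cons, Equiv.Perm.mul_apply,
      ih (a+1) (by omega) (by omega), hs a ha (by omega)]
    simp only [Equiv.Perm.mul_apply, Equiv.swap_apply_def]
    grind

lemma word_mirrorSymm {n : ℕ} {s : ℕ → Equiv.Perm ℕ}
    (hs : ∀ i, 1 ≤ i → i ≤ 4*n+1 →
      s i = Equiv.swap i (i+1) * Equiv.swap (8*n+4-i) (8*n+5-i))
    (m a : ℕ) (ha : 1 ≤ a) (hm : a + m ≤ 4*n+1) :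
    MirrorSymm n ((List.range' a m).map s).prod := by
  apply MirrorSymm.prod
  intro σ hσ
  obtain ⟨i, hi, rfl⟩ := List.mem_map.1 hσ
  rw [List.mem_range'_1] at hi
  rw [hs i (by omega) (by omega)]
  exact mirrorSymm_reflection (by omega) (by omega)

/-- The value of `τ_{2k-1} ⋯ τ_3 τ_1` at a position `1 ≤ j ≤ 4n+2`. -/
def partialValue (n k j : ℕ) : ℕ :=
  if j ≤ k ∨ 4*n+3 ≤ j + k then 2*j
  else if j + k = 4*n+2 ∧ Odd k then 4*n+3
  else j + k

/-- Multiplication by `τ_{2i-1}` with `i = k+1` odd; `p` stands for `s_{2i-1} ⋯ s_{4n}`. -/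
lemma step_odd {n k j : ℕ} {p : Equiv.Perm ℕ} (h : Even k) (hk : k < 2*n) (h1 : 1 ≤ j)
    (h2 : j ≤ 4*n+2)
    (hl : ∀ x, x ≤ 4*n+2 → p x =
      if x = 4*n+1 then 2*(k+1)-1 else if 2*(k+1)-1 ≤ x ∧ x < 4*n+1 then x + 1 else x)
    (hh : ∀ x, 4*n+3 ≤ x → x ≤ 8*n+4 → p x =
      if x = 4*n+4 then 8*n+6-2*(k+1)
      else if x ≤ 8*n+6-2*(k+1) ∧ 4*n+4 < x then x - 1 else x) :
    p ((Equiv.swap (4*n+1) (4*n+3) * Equiv.swap (4*n+2) (4*n+4)) (partialValue n k j)) =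
      partialValue n (k+1) j := by
  have h0 : ¬ Odd k := Nat.not_odd_iff_even.2 h
  have h' : Odd (k+1) := h.add_one
  simp only [partialValue, h0, h', and_true, and_false, if_false, Equiv.Perm.mul_apply,
    Equiv.swap_apply_def]
  by_cases hlo : j ≤ k
  · have := hl (2*j)
    grind
  by_cases hhi : 4*n+3 ≤ j + k
  · have := hh (2*j)
    grind
  by_cases hmid : j + k = 4*n+2
  · have := hl (4*n+1)
    have := hl (4*n+2)
    have := hh (4*n+4)
    have := hh (4*n+3)
    grind
  by_cases hmid' : j + k = 4*n+1
  · have := hl (4*n+2)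
    have := hh (4*n+3)
    grind
  have := hl (j + k)
  grind

/-- Multiplication by `τ_{2i-1}` with `i = k+1` even; `p` stands for `s_{2i-1} ⋯ s_{4n}`. -/
lemma step_even {n k j : ℕ} {p : Equiv.Perm ℕ} (h : Odd k) (hk : k < 2*n) (h1 : 1 ≤ j)
    (h2 : j ≤ 4*n+2)
    (hl : ∀ x, x ≤ 4*n+2 → p x =
      if x = 4*n+1 then 2*(k+1)-1 else if 2*(k+1)-1 ≤ x ∧ x < 4*n+1 then x + 1 else x)
    (hh : ∀ x, 4*n+3 ≤ x → x ≤ 8*n+4 → p x =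
      if x = 4*n+4 then 8*n+6-2*(k+1)
      else if x ≤ 8*n+6-2*(k+1) ∧ 4*n+4 < x then x - 1 else x) :
    p ((Equiv.swap (4*n+1) (4*n+1+1) * Equiv.swap (8*n+4-(4*n+1)) (8*n+5-(4*n+1))) (partialValue n k j)) =
      partialValue n (k+1) j := by
  have h0 : ¬ Odd (k+1) := Nat.not_odd_iff_even.2 h.add_one
  rw [show 8*n+4-(4*n+1) = 4*n+3 by omega, show 8*n+5-(4*n+1) = 4*n+4 by omega]
  simp only [partialValue, h, h0, and_true, and_false, if_false, Equiv.Perm.mul_apply,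
    Equiv.swap_apply_def]
  by_cases hlo : j ≤ k
  · have := hl (2*j)
    grind
  by_cases hhi : 4*n+3 ≤ j + k
  · have := hh (2*j)
    grind
  by_cases hmid : j + k = 4*n+2
  · have := hl (4*n+1)
    have := hl (4*n+2)
    have := hh (4*n+4)
    have := hh (4*n+3)
    grind
  by_cases hmid' : j + k = 4*n+1
  · have := hl (4*n+2)
    have := hh (4*n+3)
    grind
  have := hl (j + k)
  grind

/-- one-line notation of the minimal element `v₁`.
`s i` (for `1 ≤ i ≤ 4n+1`) swaps `i ↔ i+1` and `8n+4-i ↔ 8n+5-i`;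
`s (4n+2)` swaps `4n+1 ↔ 4n+3` and `4n+2 ↔ 4n+4`.
`τ i` stands for `τ_{2i-1} = s_{2i-1} s_{2i} ⋯ s_{4n} s_{4n+1 or 4n+2}` (last factor
`s (4n+1)` if `i` is even, `s (4n+2)` if `i` is odd).
`v₁ = s_{4n+2} · τ_{4n-1} · τ_{4n-3} ⋯ τ_3 · τ_1`, the rightmost factor acting first. -/
theorem stmt_0 (n : ℕ) (hn : 1 ≤ n)
    (s : ℕ → Equiv.Perm ℕ)
    (hs : ∀ i, 1 ≤ i → i ≤ 4*n+1 →
      s i = Equiv.swap i (i+1) * Equiv.swap (8*n+4-i) (8*n+5-i))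
    (hs' : s (4*n+2) = Equiv.swap (4*n+1) (4*n+3) * Equiv.swap (4*n+2) (4*n+4))
    (τ : ℕ → Equiv.Perm ℕ)
    (hτeven : ∀ i, 1 ≤ i → i ≤ 2*n → Even i →
      τ i = (((List.range' (2*i-1) (4*n - (2*i-1) + 1)).map s).prod) * s (4*n+1))
    (hτodd : ∀ i, 1 ≤ i → i ≤ 2*n → Odd i →
      τ i = (((List.range' (2*i-1) (4*n - (2*i-1) + 1)).map s).prod) * s (4*n+2))
    (v₁ : Equiv.Perm ℕ)
    (hv₁ : v₁ = s (4*n+2) * (((List.range (2*n)).reverse.map (fun i => τ (i+1))).prod)) :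
    (∀ j, 1 ≤ j → j ≤ 2*n → v₁ j = 2*j) ∧
    v₁ (2*n+1) = 4*n+3 ∧
    v₁ (2*n+2) = 4*n+4 ∧
    (∀ j, 2*n+3 ≤ j → j ≤ 4*n+2 → v₁ j = 2*j) ∧
    (∀ j, 1 ≤ j → j ≤ 4*n+2 → v₁ (8*n+5-j) = 8*n+5 - v₁ j) := by
  have hword : ∀ i, 1 ≤ i → i ≤ 2*n →
      MirrorSymm n ((List.range' (2*i-1) (4*n - (2*i-1) + 1)).map s).prod :=
    fun i h1 h2 => word_mirrorSymm hs _ _ (by omega) (by omega)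
  have hlast : MirrorSymm n (s (4*n+2)) := hs' ▸ mirrorSymm_last n
  have hτ : ∀ i, 1 ≤ i → i ≤ 2*n → MirrorSymm n (τ i) := by
    intro i h1 h2
    rcases Nat.even_or_odd i with h | h
    · rw [hτeven i h1 h2 h, hs (4*n+1) (by omega) le_rfl]
      exact (hword i h1 h2).mul (mirrorSymm_reflection (by omega) le_rfl)
    · rw [hτodd i h1 h2 h]
      exact (hword i h1 h2).mul hlast
  -- The values of the word `s_{2i-1} ⋯ s_{4n}` on both halves, the upper one by mirroring.
  have hlow : ∀ i x, 1 ≤ i → i ≤ 2*n → x ≤ 4*n+2 →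
      ((List.range' (2*i-1) (4*n - (2*i-1) + 1)).map s).prod x =
        if x = 4*n+1 then 2*i-1 else if 2*i-1 ≤ x ∧ x < 4*n+1 then x + 1 else x := by
    intro i x h1 h2 hx
    rw [word_apply hs _ _ _ (by omega) (by omega) hx,
      show 2*i-1 + (4*n - (2*i-1) + 1) = 4*n+1 by omega]
  have hhigh : ∀ i x, 1 ≤ i → i ≤ 2*n → 4*n+3 ≤ x → x ≤ 8*n+4 →
      ((List.range' (2*i-1) (4*n - (2*i-1) + 1)).map s).prod x =
        if x = 4*n+4 then 8*n+6-2*i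
        else if x ≤ 8*n+6-2*i ∧ 4*n+4 < x then x - 1 else x := by
    intro i x h1 h2 hx hx'
    have h := (hword i h1 h2 (8*n+5-x) (by omega) (by omega)).2.2
    rw [show 8*n+5-(8*n+5-x) = x by omega, hlow i (8*n+5-x) h1 h2 (by omega)] at h
    rw [h]
    grind
  have hsymm : ∀ k, k ≤ 2*n →
      MirrorSymm n ((List.range k).reverse.map (fun i => τ (i+1))).prod := by
    intro k hk
    apply MirrorSymm.prod
    intro σ hσ
    obtain ⟨i, hi, rfl⟩ := List.mem_map.1 hσ
    rw [List.mem_reverse, List.mem_range] at hi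
    exact hτ _ (by omega) (by omega)
  have hval : ∀ k, k ≤ 2*n → ∀ j, 1 ≤ j → j ≤ 4*n+2 →
      ((List.range k).reverse.map (fun i => τ (i+1))).prod j = partialValue n k j := by
    intro k
    induction k with
    | zero => intro _ j h1 h2; simp [partialValue]; omega
    | succ k ih =>
      intro hk j h1 h2
      have hv := ih (by omega) j h1 h2
      rw [List.range_succ, List.reverse_append, List.reverse_singleton, List.singleton_append,
        List.map_cons, List.prod_cons, Equiv.Perm.mul_apply, hv]
      have hl := fun x => hlow (k+1) x (by omega) hk
      have hh := fun x => hhigh (k+1) x (by omega) hk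
      rcases Nat.even_or_odd k with h | h
      · have h' : Odd (k+1) := h.add_one
        rw [hτodd _ (by omega) hk h', hs', Equiv.Perm.mul_apply]
        exact step_odd h (by omega) h1 h2 hl hh
      · have h' : Even (k+1) := h.add_one
        rw [hτeven _ (by omega) hk h', hs _ (by omega) le_rfl, Equiv.Perm.mul_apply]
        exact step_even h (by omega) h1 h2 hl hh
  have hodd : ¬ Odd (2*n) := by simp
  have hfin : ∀ j, 1 ≤ j → j ≤ 4*n+2 → v₁ j =
      if j = 2*n+1 then 4*n+3 else if j = 2*n+2 then 4*n+4 else 2*j := by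
    intro j h1 h2
    rw [hv₁, Equiv.Perm.mul_apply, hval _ le_rfl j h1 h2, hs']
    simp only [partialValue, hodd, and_false, if_false, Equiv.Perm.mul_apply,
      Equiv.swap_apply_def]
    grind
  refine ⟨fun j h1 h2 => ?_, ?_, ?_, fun j h1 h2 => ?_, fun j h1 h2 => ?_⟩
  · rw [hfin j h1 (by omega), if_neg (by omega), if_neg (by omega)]
  · rw [hfin _ (by omega) (by omega), if_pos rfl]
  · rw [hfin _ (by omega) (by omega), if_neg (by omega), if_pos rfl]
  · rw [hfin j (by omega) h2, if_neg (by omega), if_neg (by omega)]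
  · rw [hv₁]
    exact (hlast.mul (hsymm _ le_rfl) j h1 (by omega)).2.2
end

section
/- Let e be an admissible tableau supported on X(v_6). Then for every j with 1 ≤ j ≤ 2n−2 or 2n+5 ≤ j ≤ 4n+2, one has e(i,j) = 2j−1 for all 1 ≤ i ≤ k and e(i,j) = 2j for all k+1 ≤ i ≤ 2k. Moreover e(i,2n−1) = 4n−3 for all 1 ≤ i ≤ k, and e(i,2n+4) = 4n+8 for all k+1 ≤ i ≤ 2k. -/
/-!
Every row has `4n+2` distinct entries in `{1,…,8n+4}` and meets each of the `4n+2` pairs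
`{t, 8n+5-t}` at most once, hence exactly once. Over the `2k` rows, `t` and `8n+5-t` together
occur `2k` times, so by the balance condition every value occurs exactly `k` times
(`card_cells_eq`).

If the bound on column `j` is `2j`, the `2kj` cells of the first `j` columns all have entries
`≤ 2j`; there are only `2kj` cells with such entries, so the two sets of cells agree
(`separated_of_bound`). When this holds at `j - 1`, the value `2j-1` can only occur in column `j`,
where it is the least entry, so it fills the top `k` cells (`eq_odd_of_separated`). When it holds
at `j`, the value `2j` can only occur in column `j`, where it is the largest entry, so it fills the
bottom `k` cells (`eq_even_of_separated`). The bound is `2j` for `j ≤ 2n-2` and `j ≥ 2n+4`,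
which gives all the claims.
-/

/-- The "small set" `S(i) = { e(i,j) : 1 ≤ j ≤ 4n+2, e(i,j) ≤ 4n+2 }` of row `i`. -/
def smallSet (n : ℕ) (e : ℕ → ℕ → ℕ) (i : ℕ) : Finset ℕ :=
  ((Finset.Icc 1 (4*n+2)).filter (fun j => e i j ≤ 4*n+2)).image (e i)

/-- `A = {1,3,5,…,4n-3}`, the odd integers `≤ 4n-3`. -/
def setA (n : ℕ) : Finset ℕ := (Finset.Icc 1 (4*n-3)).filter (fun t => ¬ 2 ∣ t)

/-- `B = {2,4,…,4n-4}`, the even integers `≤ 4n-4`. -/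
def setB (n : ℕ) : Finset ℕ := (Finset.Icc 1 (4*n-4)).filter (fun t => 2 ∣ t)

/-- An admissible tableau: `e i j ∈ {1,…,8n+4}` for `1 ≤ i ≤ 2k`, `1 ≤ j ≤ 4n+2`,
subject to the conditions (R1)–(R5). -/
structure IsAdmissible (n k : ℕ) (e : ℕ → ℕ → ℕ) : Prop where
  mem_range : ∀ i j, 1 ≤ i → i ≤ 2*k → 1 ≤ j → j ≤ 4*n+2 → 1 ≤ e i j ∧ e i j ≤ 8*n+4
  /-- (R1) rows strictly increase -/
  row_strict : ∀ i j, 1 ≤ i → i ≤ 2*k → 1 ≤ j → j < 4*n+2 → e i j < e i (j+1)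
  /-- (R2) columns are nondecreasing -/
  col_mono : ∀ i j, 1 ≤ i → i < 2*k → 1 ≤ j → j ≤ 4*n+2 → e i j ≤ e (i+1) j
  /-- (R3) no row contains both `t` and `8n+5-t` -/
  no_pair : ∀ i j j', 1 ≤ i → i ≤ 2*k → 1 ≤ j → j ≤ 4*n+2 → 1 ≤ j' → j' ≤ 4*n+2 →
    e i j + e i j' ≠ 8*n+5
  /-- (R4) each row has an even number of entries `> 4n+2` -/
  even_big : ∀ i, 1 ≤ i → i ≤ 2*k →
    Even (((Finset.Icc 1 (4*n+2)).filter (fun j => 4*n+2 < e i j)).card)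
  /-- (R5) `t` and `8n+5-t` occur equally often in the tableau -/
  balanced : ∀ t, 1 ≤ t → t ≤ 8*n+4 →
    (((Finset.Icc 1 (2*k)) ×ˢ (Finset.Icc 1 (4*n+2))).filter
      (fun p => e p.1 p.2 = t)).card =
    (((Finset.Icc 1 (2*k)) ×ˢ (Finset.Icc 1 (4*n+2))).filter
      (fun p => e p.1 p.2 = 8*n+5-t)).card

/-- The first `4n+2` entries of the one-line notation of `v₆`. -/
def bnd (n : ℕ) (j : ℕ) : ℕ :=
  if j ≤ 2*n-2 then 2*j
  else if j = 2*n-1 then 4*n-1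
  else if j = 2*n then 4*n+2
  else if j = 2*n+1 then 4*n+4
  else if j = 2*n+2 then 4*n+5
  else if j = 2*n+3 then 4*n+7
  else 2*j

/-- The tableau is supported on the Schubert variety `X(v₆)`. -/
def SupportedOnXv6 (n k : ℕ) (e : ℕ → ℕ → ℕ) : Prop :=
  ∀ j, 1 ≤ j → j ≤ 4*n+2 → e (2*k) j ≤ bnd n j

/-- The cells `(i, j)` of the tableau whose entry is `t`. -/
def cells (n k : ℕ) (e : ℕ → ℕ → ℕ) (t : ℕ) : Finset (ℕ × ℕ) :=
  ((Finset.Icc 1 (2*k)) ×ˢ (Finset.Icc 1 (4*n+2))).filter (fun p => e p.1 p.2 = t)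

/-- The entries `≤ 2j` of the tableau are exactly those in the first `j` columns. -/
def Separated (n k : ℕ) (e : ℕ → ℕ → ℕ) (j : ℕ) : Prop :=
  ∀ i l, 1 ≤ i → i ≤ 2*k → 1 ≤ l → l ≤ 4*n+2 → (e i l ≤ 2*j ↔ l ≤ j)

theorem mem_cells {n k : ℕ} {e : ℕ → ℕ → ℕ} {t : ℕ} {p : ℕ × ℕ} :
    p ∈ cells n k e t ↔
      ((1 ≤ p.1 ∧ p.1 ≤ 2*k) ∧ (1 ≤ p.2 ∧ p.2 ≤ 4*n+2)) ∧ e p.1 p.2 = t := by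
  simp [cells]

section
variable {n k : ℕ} {e : ℕ → ℕ → ℕ}

theorem row_lt (he : IsAdmissible n k e) {i : ℕ} (hi : 1 ≤ i) (hi' : i ≤ 2*k) {a b : ℕ}
    (ha : 1 ≤ a) (hab : a < b) (hb : b ≤ 4*n+2) : e i a < e i b := by
  induction b, hab using Nat.le_induction with
  | base => exact he.row_strict i a hi hi' ha (by omega)
  | succ m hm ih =>
    have h1 := ih (by omega)
    have h2 := he.row_strict i m hi hi' (by omega) (by omega)
    omega

theorem col_le (he : IsAdmissible n k e) {j : ℕ} (hj : 1 ≤ j) (hj' : j ≤ 4*n+2) {a b : ℕ}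
    (ha : 1 ≤ a) (hab : a ≤ b) (hb : b ≤ 2*k) : e a j ≤ e b j := by
  induction b, hab using Nat.le_induction with
  | base => exact le_rfl
  | succ m hm ih =>
    have h1 := ih (by omega)
    have h2 := he.col_mono m j (by omega) (by omega) hj hj'
    omega

theorem row_injOn (he : IsAdmissible n k e) {i : ℕ} (hi : 1 ≤ i) (hi' : i ≤ 2*k) :
    Set.InjOn (e i) (Finset.Icc 1 (4*n+2) : Finset ℕ) := by
  intro a ha b hb hab
  simp only [Finset.coe_Icc, Set.mem_Icc] at ha hb
  rcases lt_trichotomy a b with h | h | h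
  · have := row_lt he hi hi' ha.1 h hb.2
    omega
  · exact h
  · have := row_lt he hi hi' hb.1 h ha.2
    omega

/-- Reason: a row and its reflection under `t ↦ 8n+5-t` are disjoint sets of size `4n+2`, so together
they fill `{1,…,8n+4}`. -/
theorem row_meets_pair (he : IsAdmissible n k e) {i : ℕ} (hi : 1 ≤ i) (hi' : i ≤ 2*k) {t : ℕ}
    (ht : 1 ≤ t) (ht' : t ≤ 8*n+4) :
    ∃ j, (1 ≤ j ∧ j ≤ 4*n+2) ∧ (e i j = t ∨ e i j = 8*n+5-t) := by
  classical
  set J := Finset.Icc 1 (4*n+2) with hJ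
  have hinj := row_injOn he hi hi'
  have hrange : ∀ j ∈ J, 1 ≤ e i j ∧ e i j ≤ 8*n+4 := by
    intro j hj
    rw [hJ, Finset.mem_Icc] at hj
    exact he.mem_range i j hi hi' hj.1 hj.2
  have hc1 : (J.image (e i)).card = 4*n+2 := by
    rw [Finset.card_image_of_injOn hinj]
    simp [hJ]
  have hc2 : (J.image (fun j => 8*n+5 - e i j)).card = 4*n+2 := by
    rw [Finset.card_image_of_injOn]
    · simp [hJ]
    · intro a ha b hb hab
      have h1 := hrange a ha
      have h2 := hrange b hb
      exact hinj ha hb (by simp only at hab; omega)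
  have hdisj : Disjoint (J.image (e i)) (J.image (fun j => 8*n+5 - e i j)) := by
    rw [Finset.disjoint_left]
    intro x hx hx'
    obtain ⟨a, ha, rfl⟩ := Finset.mem_image.1 hx
    obtain ⟨b, hb, hab⟩ := Finset.mem_image.1 hx'
    have h1 := hrange b hb
    rw [hJ, Finset.mem_Icc] at ha hb
    have := he.no_pair i a b hi hi' ha.1 ha.2 hb.1 hb.2
    omega
  have hun : J.image (e i) ∪ J.image (fun j => 8*n+5 - e i j) = Finset.Icc 1 (8*n+4) := by
    apply Finset.eq_of_subset_of_card_le
    · intro x hx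
      rw [Finset.mem_Icc]
      rcases Finset.mem_union.1 hx with hx | hx
      · obtain ⟨a, ha, rfl⟩ := Finset.mem_image.1 hx
        exact hrange a ha
      · obtain ⟨a, ha, rfl⟩ := Finset.mem_image.1 hx
        have := hrange a ha
        omega
    · rw [Finset.card_union_of_disjoint hdisj, hc1, hc2]
      simp only [Nat.card_Icc]
      omega
  have hmem : t ∈ J.image (e i) ∪ J.image (fun j => 8*n+5 - e i j) := by
    rw [hun, Finset.mem_Icc]
    exact ⟨ht, ht'⟩
  rcases Finset.mem_union.1 hmem with hx | hx
  · obtain ⟨a, ha, h⟩ := Finset.mem_image.1 hx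
    exact ⟨a, Finset.mem_Icc.1 ha, Or.inl h⟩
  · obtain ⟨a, ha, h⟩ := Finset.mem_image.1 hx
    have := hrange a ha
    exact ⟨a, Finset.mem_Icc.1 ha, Or.inr (by omega)⟩

/-- Every value occurs exactly `k` times: projecting to the row index is a bijection from the
cells with entry `t` or `8n+5-t` to the `2k` rows, and the two values occur equally often. -/
theorem card_cells_eq (he : IsAdmissible n k e) {t : ℕ} (ht : 1 ≤ t) (ht' : t ≤ 8*n+4) :
    (cells n k e t).card = k := by
  classical
  have hbal : (cells n k e t).card = (cells n k e (8*n+5-t)).card := he.balanced t ht ht'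
  have hdisj : Disjoint (cells n k e t) (cells n k e (8*n+5-t)) := by
    rw [Finset.disjoint_left]
    intro p hp hp'
    have h1 := (mem_cells.1 hp).2
    have h2 := (mem_cells.1 hp').2
    omega
  have himg : (cells n k e t ∪ cells n k e (8*n+5-t)).image Prod.fst = Finset.Icc 1 (2*k) := by
    ext i
    rw [Finset.mem_image, Finset.mem_Icc]
    constructor
    · rintro ⟨p, hp, rfl⟩
      rcases Finset.mem_union.1 hp with hp | hp <;> exact (mem_cells.1 hp).1.1
    · rintro ⟨hi, hi'⟩
      obtain ⟨j, hj, h | h⟩ := row_meets_pair he hi hi' ht ht'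
      · exact ⟨(i, j), Finset.mem_union_left _ (mem_cells.2 ⟨⟨⟨hi, hi'⟩, hj⟩, h⟩), rfl⟩
      · exact ⟨(i, j), Finset.mem_union_right _ (mem_cells.2 ⟨⟨⟨hi, hi'⟩, hj⟩, h⟩), rfl⟩
  have hinj : Set.InjOn Prod.fst
      ((cells n k e t ∪ cells n k e (8*n+5-t) : Finset (ℕ × ℕ)) : Set (ℕ × ℕ)) := by
    rintro ⟨i, a⟩ ha ⟨i', b⟩ hb hii
    simp only at hii
    subst hii
    rw [Finset.mem_coe, Finset.mem_union, mem_cells, mem_cells] at ha hb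
    simp only at ha hb
    have hi : 1 ≤ i ∧ i ≤ 2*k := by tauto
    have ha' : 1 ≤ a ∧ a ≤ 4*n+2 := by tauto
    have hb' : 1 ≤ b ∧ b ≤ 4*n+2 := by tauto
    have hp := he.no_pair i a b hi.1 hi.2 ha'.1 ha'.2 hb'.1 hb'.2
    have hab : a = b := row_injOn he hi.1 hi.2 (Finset.mem_coe.2 (Finset.mem_Icc.2 ha'))
      (Finset.mem_coe.2 (Finset.mem_Icc.2 hb')) (by omega)
    rw [hab]
  have hcard := Finset.card_image_of_injOn hinj
  rw [himg, Finset.card_union_of_disjoint hdisj, Nat.card_Icc] at hcard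
  omega

theorem separated_of_bound (he : IsAdmissible n k e) {j : ℕ} (hj : j ≤ 4*n+2)
    (hb : 1 ≤ j → e (2*k) j ≤ 2*j) : Separated n k e j := by
  classical
  have hle : ∀ i l, 1 ≤ i → i ≤ 2*k → 1 ≤ l → l ≤ j → e i l ≤ 2*j := by
    intro i l hi hi' hl hl'
    have h1 := col_le he (j := j) (by omega) hj hi hi' le_rfl
    have h2 := hb (by omega)
    rcases Nat.lt_or_eq_of_le hl' with h | rfl
    · have := row_lt he hi hi' hl h hj
      omega
    · omega
  have hsub : (Finset.Icc 1 (2*k)) ×ˢ (Finset.Icc 1 j) ⊆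
      (Finset.Icc 1 (2*j)).biUnion (cells n k e) := by
    rintro ⟨i, l⟩ hp
    rw [Finset.mem_product, Finset.mem_Icc, Finset.mem_Icc] at hp
    obtain ⟨⟨hi, hi'⟩, hl, hl'⟩ := hp
    simp only at hi hi' hl hl'
    have h1 := (he.mem_range i l hi hi' hl (by omega)).1
    exact Finset.mem_biUnion.2 ⟨e i l, Finset.mem_Icc.2 ⟨h1, hle i l hi hi' hl hl'⟩,
      mem_cells.2 ⟨⟨⟨hi, hi'⟩, hl, by simp only; omega⟩, rfl⟩⟩
  have hcard : ((Finset.Icc 1 (2*j)).biUnion (cells n k e)).card ≤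
      ((Finset.Icc 1 (2*k)) ×ˢ (Finset.Icc 1 j)).card := by
    refine (Finset.card_biUnion_le_card_mul _ _ k ?_).trans ?_
    · intro t ht
      rw [Finset.mem_Icc] at ht
      exact (card_cells_eq he ht.1 (by omega)).le
    · simp only [Finset.card_product, Nat.card_Icc, Nat.add_sub_cancel]
      exact le_of_eq (by ring)
  have heq := Finset.eq_of_subset_of_card_le hsub hcard
  intro i l hi hi' hl hl'
  refine ⟨fun h => ?_, hle i l hi hi' hl⟩
  have hmem : (i, l) ∈ (Finset.Icc 1 (2*j)).biUnion (cells n k e) :=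
    Finset.mem_biUnion.2 ⟨e i l,
      Finset.mem_Icc.2 ⟨(he.mem_range i l hi hi' hl hl').1, h⟩,
      mem_cells.2 ⟨⟨⟨hi, hi'⟩, hl, hl'⟩, rfl⟩⟩
  rw [← heq, Finset.mem_product, Finset.mem_Icc, Finset.mem_Icc] at hmem
  exact hmem.2.2

theorem eq_odd_of_separated (he : IsAdmissible n k e) {j : ℕ} (hj : 1 ≤ j) (hj' : j ≤ 4*n+2)
    (hs : Separated n k e (j-1)) {i : ℕ} (hi : 1 ≤ i) (hi' : i ≤ k) : e i j = 2*j-1 := by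
  by_contra hne
  have hgt : 2*j-1 < e i j := by
    have := hs i j hi (by omega) hj hj'
    omega
  -- All occurrences of `2j-1` lie in column `j`, strictly above row `i`: fewer than `k` cells.
  have hsub : cells n k e (2*j-1) ⊆ (Finset.Icc 1 (i-1)) ×ˢ {j} := by
    rintro ⟨a, l⟩ hp
    obtain ⟨⟨⟨ha, ha'⟩, hl, hl'⟩, h⟩ := mem_cells.1 hp
    simp only at ha ha' hl hl' h
    have h1 := hs a l ha ha' hl hl'
    have h2 := hs a j ha ha' hj hj'
    have hlj : l = j := by
      rcases lt_trichotomy l j with hlt | heq | hlt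
      · omega
      · exact heq
      · have := row_lt he ha ha' hj hlt hl'
        omega
    subst hlj
    have hai : a < i := by
      by_contra hia
      have := col_le he hj hj' hi (not_lt.1 hia) ha'
      omega
    rw [Finset.mem_product, Finset.mem_Icc, Finset.mem_singleton]
    exact ⟨⟨ha, by simp only; omega⟩, rfl⟩
  have hcard := Finset.card_le_card hsub
  rw [card_cells_eq he (by omega) (by omega)] at hcard
  simp only [Finset.card_product, Nat.card_Icc, Finset.card_singleton] at hcard
  omega

theorem eq_even_of_separated (he : IsAdmissible n k e) {j : ℕ} (hj : 1 ≤ j) (hj' : j ≤ 4*n+2)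
    (hs : Separated n k e j) {i : ℕ} (hi : k+1 ≤ i) (hi' : i ≤ 2*k) : e i j = 2*j := by
  by_contra hne
  have hgt : e i j < 2*j := by
    have := hs i j (by omega) hi' hj hj'
    omega
  -- All occurrences of `2j` lie in column `j`, strictly below row `i`: fewer than `k` cells.
  have hsub : cells n k e (2*j) ⊆ (Finset.Icc (i+1) (2*k)) ×ˢ {j} := by
    rintro ⟨a, l⟩ hp
    obtain ⟨⟨⟨ha, ha'⟩, hl, hl'⟩, h⟩ := mem_cells.1 hp
    simp only at ha ha' hl hl' h
    have h1 := hs a l ha ha' hl hl'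
    have h2 := hs a j ha ha' hj hj'
    have hlj : l = j := by
      rcases lt_trichotomy l j with hlt | heq | hlt
      · have := row_lt he ha ha' hl hlt hj'
        omega
      · exact heq
      · omega
    subst hlj
    have hai : i < a := by
      by_contra hia
      have := col_le he hj hj' ha (not_lt.1 hia) hi'
      omega
    rw [Finset.mem_product, Finset.mem_Icc, Finset.mem_singleton]
    exact ⟨⟨hai, ha'⟩, rfl⟩
  have hcard := Finset.card_le_card hsub
  rw [card_cells_eq he (by omega) (by omega)] at hcard
  simp only [Finset.card_product, Nat.card_Icc, Finset.card_singleton] at hcard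
  omega

end

/-- fixed columns of an admissible tableau supported on `X(v₆)`. -/
theorem stmt_3 (n k : ℕ) (hn : 1 ≤ n) (hk : 1 ≤ k) (e : ℕ → ℕ → ℕ)
    (he : IsAdmissible n k e) (hsupp : SupportedOnXv6 n k e) :
    (∀ j, ((1 ≤ j ∧ j ≤ 2*n-2) ∨ (2*n+5 ≤ j ∧ j ≤ 4*n+2)) →
      (∀ i, 1 ≤ i → i ≤ k → e i j = 2*j-1) ∧
      (∀ i, k+1 ≤ i → i ≤ 2*k → e i j = 2*j)) ∧
    (∀ i, 1 ≤ i → i ≤ k → e i (2*n-1) = 4*n-3) ∧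
    (∀ i, k+1 ≤ i → i ≤ 2*k → e i (2*n+4) = 4*n+8) := by
  have hsep : ∀ j, j ≤ 2*n-2 ∨ 2*n+4 ≤ j → j ≤ 4*n+2 → Separated n k e j := by
    intro j hj hj'
    refine separated_of_bound he hj' fun h1 => ?_
    have hb : bnd n j = 2*j := by
      unfold bnd
      split_ifs <;> omega
    exact hb ▸ hsupp j h1 hj'
  refine ⟨fun j hj => ⟨fun i hi hi' => ?_, fun i hi hi' => ?_⟩, fun i hi hi' => ?_,
    fun i hi hi' => ?_⟩
  · exact eq_odd_of_separated he (by omega) (by omega) (hsep (j-1) (by omega) (by omega)) hi hi'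
  · exact eq_even_of_separated he (by omega) (by omega) (hsep j (by omega) (by omega)) hi hi'
  · have h := eq_odd_of_separated he (j := 2*n-1) (by omega) (by omega)
      (hsep (2*n-1-1) (by omega) (by omega)) hi hi'
    omega
  · have h := eq_even_of_separated he (j := 2*n+4) (by omega) (by omega)
      (hsep (2*n+4) (by omega) (by omega)) hi hi'
    omega
end

section
/- Let e be an admissible tableau supported on X(v_6). Then the small set of the last row, S(2k), is one of the following six sets: B∪{4n−2,4n}, B∪{4n−1,4n}, B∪{4n−2,4n+1}, B∪{4n−1,4n+1}, B∪{4n−2,4n+2}, B∪{4n−1,4n+2}. -/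
theorem row_lt_s4 {n k : ℕ} {e : ℕ → ℕ → ℕ} (he : IsAdmissible n k e) {i : ℕ} (hi : 1 ≤ i)
    (hi' : i ≤ 2*k) {j j' : ℕ} (hj : 1 ≤ j) (hjj : j < j') (hj' : j' ≤ 4*n+2) :
    e i j < e i j' := by
  induction j', hjj using Nat.le_induction with
  | base => exact he.row_strict i j hi hi' hj (by omega)
  | succ m hm ih =>
    have h1 := ih (by omega)
    have h2 := he.row_strict i m hi hi' (by omega) (by omega)
    omega

theorem row_le {n k : ℕ} {e : ℕ → ℕ → ℕ} (he : IsAdmissible n k e) {i : ℕ} (hi : 1 ≤ i)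
    (hi' : i ≤ 2*k) {j j' : ℕ} (hj : 1 ≤ j) (hjj : j ≤ j') (hj' : j' ≤ 4*n+2) :
    e i j ≤ e i j' := by
  rcases hjj.eq_or_lt with rfl | h
  · exact le_rfl
  · exact (row_lt_s4 he hi hi' hj h hj').le

theorem row_inj {n k : ℕ} {e : ℕ → ℕ → ℕ} (he : IsAdmissible n k e) {i : ℕ} (hi : 1 ≤ i)
    (hi' : i ≤ 2*k) {j j' : ℕ} (hj : 1 ≤ j) (hjm : j ≤ 4*n+2) (hj' : 1 ≤ j')
    (hjm' : j' ≤ 4*n+2) (h : e i j = e i j') : j = j' := by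
  rcases lt_trichotomy j j' with h1 | h1 | h1
  · have := row_lt_s4 he hi hi' hj h1 hjm'
    omega
  · exact h1
  · have := row_lt_s4 he hi hi' hj' h1 hjm
    omega

theorem le_last_row {n k : ℕ} {e : ℕ → ℕ → ℕ} (he : IsAdmissible n k e) {i j : ℕ} (hi : 1 ≤ i)
    (hi' : i ≤ 2*k) (hj : 1 ≤ j) (hj' : j ≤ 4*n+2) : e i j ≤ e (2*k) j := by
  have key : ∀ d i, 1 ≤ i → i + d = 2*k → e i j ≤ e (2*k) j := by
    intro d
    induction d with
    | zero =>
      intro i _ h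
      rw [← h, Nat.add_zero]
    | succ d ih =>
      intro i hi h
      exact (he.col_mono i j hi (by omega) hj hj').trans (ih (i+1) (by omega) (by omega))
  exact key (2*k - i) i hi (by omega)

/-- Every value occurs at most `k` times in an admissible tableau. -/
theorem card_value_le {n k : ℕ} {e : ℕ → ℕ → ℕ} (he : IsAdmissible n k e) {t : ℕ} (ht : 1 ≤ t)
    (ht' : t ≤ 8*n+4) :
    (((Finset.Icc 1 (2*k)) ×ˢ (Finset.Icc 1 (4*n+2))).filter
      (fun p => e p.1 p.2 = t)).card ≤ k := by
  have hb := he.balanced t ht ht'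
  set F := ((Finset.Icc 1 (2*k)) ×ˢ (Finset.Icc 1 (4*n+2))).filter
    (fun p : ℕ × ℕ => e p.1 p.2 = t) with hF
  set G := ((Finset.Icc 1 (2*k)) ×ˢ (Finset.Icc 1 (4*n+2))).filter
    (fun p : ℕ × ℕ => e p.1 p.2 = 8*n+5-t) with hG
  have hdisj : Disjoint F G := by
    rw [Finset.disjoint_left]
    intro p hp hq
    simp only [hF, hG, Finset.mem_filter] at hp hq
    omega
  -- The row index is injective on the cells holding `t` or `8n+5-t`.
  have hcard : (F ∪ G).card ≤ (Finset.Icc 1 (2*k)).card := by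
    apply Finset.card_le_card_of_injOn Prod.fst
    · intro p hp
      simp only [hF, hG, Finset.coe_union, Set.mem_union, Finset.mem_coe, Finset.mem_filter,
        Finset.mem_product] at hp
      rcases hp with hp | hp <;> exact hp.1.1
    · rintro ⟨i, j⟩ hp ⟨i', j'⟩ hq hii
      simp only [hF, hG, Finset.coe_union, Set.mem_union, Finset.mem_coe, Finset.mem_filter,
        Finset.mem_product, Finset.mem_Icc] at hp hq hii
      subst hii
      have hi : 1 ≤ i ∧ i ≤ 2*k := by omega
      have hj : 1 ≤ j ∧ j ≤ 4*n+2 := by omega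
      have hj' : 1 ≤ j' ∧ j' ≤ 4*n+2 := by omega
      have hne := he.no_pair i j j' hi.1 hi.2 hj.1 hj.2 hj'.1 hj'.2
      have := row_inj he hi.1 hi.2 hj.1 hj.2 hj'.1 hj'.2 (by omega)
      rw [this]
  rw [Finset.card_union_of_disjoint hdisj, Nat.card_Icc] at hcard
  omega

/-- The last row of an admissible tableau dominates `2, 4, 6, …`. -/
theorem two_mul_le_last {n k : ℕ} (hk : 1 ≤ k) {e : ℕ → ℕ → ℕ} (he : IsAdmissible n k e)
    {j : ℕ} (hj : 1 ≤ j) (hj' : j ≤ 4*n+2) : 2*j ≤ e (2*k) j := by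
  have hr := he.mem_range (2*k) j (by omega) le_rfl hj hj'
  have hmaps : ∀ p ∈ (Finset.Icc 1 (2*k)) ×ˢ (Finset.Icc 1 j),
      e p.1 p.2 ∈ Finset.Icc 1 (e (2*k) j) := by
    rintro ⟨i, l⟩ hp
    simp only [Finset.mem_product, Finset.mem_Icc] at hp ⊢
    obtain ⟨⟨hi, hi'⟩, hl, hl'⟩ := hp
    exact ⟨(he.mem_range i l hi hi' hl (hl'.trans hj')).1,
      (row_le he hi hi' hl hl' hj').trans (le_last_row he hi hi' hj hj')⟩
  have hcount := Finset.card_le_mul_card_image_of_maps_to hmaps k (by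
    intro t ht
    rw [Finset.mem_Icc] at ht
    refine le_trans (Finset.card_le_card ?_) (card_value_le he ht.1 (ht.2.trans hr.2))
    apply Finset.filter_subset_filter
    exact Finset.product_subset_product_right (Finset.Icc_subset_Icc_right hj'))
  simp only [Finset.card_product, Nat.card_Icc, Nat.add_sub_cancel] at hcount
  refine le_of_mul_le_mul_left (a := k) ?_ hk
  calc k * (2*j) = 2*k*j := by ring
    _ ≤ k * e (2*k) j := hcount

/-- the small set of the last row is one of six possibilities. -/
theorem stmt_4 (n k : ℕ) (hn : 1 ≤ n) (hk : 1 ≤ k) (e : ℕ → ℕ → ℕ)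
    (he : IsAdmissible n k e) (hsupp : SupportedOnXv6 n k e) :
    smallSet n e (2*k) = setB n ∪ {4*n-2, 4*n} ∨
    smallSet n e (2*k) = setB n ∪ {4*n-1, 4*n} ∨
    smallSet n e (2*k) = setB n ∪ {4*n-2, 4*n+1} ∨
    smallSet n e (2*k) = setB n ∪ {4*n-1, 4*n+1} ∨
    smallSet n e (2*k) = setB n ∪ {4*n-2, 4*n+2} ∨
    smallSet n e (2*k) = setB n ∪ {4*n-1, 4*n+2} := by
  have low := fun j (h1 : 1 ≤ j) (h2 : j ≤ 4*n+2) => two_mul_le_last hk he h1 h2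
  have lt := fun {j j' : ℕ} => row_lt_s4 (j := j) (j' := j') he (by omega : 1 ≤ 2*k) le_rfl
  have heven := he.even_big (2*k) (by omega) le_rfl
  generalize hf : e (2*k) = f at *
  have hB : ∀ j, 1 ≤ j → j ≤ 2*n-2 → f j = 2*j := by
    intro j h1 h2
    have h3 := hsupp j h1 (by omega)
    rw [hf, bnd, if_pos h2] at h3
    have := low j h1 (by omega)
    omega
  have ha : f (2*n-1) = 4*n-2 ∨ f (2*n-1) = 4*n-1 := by
    have h3 := hsupp (2*n-1) (by omega) (by omega)
    rw [hf, bnd, if_neg (by omega), if_pos rfl] at h3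
    have := low (2*n-1) (by omega) (by omega)
    omega
  have hb : f (2*n) = 4*n ∨ f (2*n) = 4*n+1 ∨ f (2*n) = 4*n+2 := by
    have h3 := hsupp (2*n) (by omega) (by omega)
    rw [hf, bnd, if_neg (by omega), if_neg (by omega), if_pos rfl] at h3
    have := low (2*n) (by omega) (by omega)
    omega
  have hbig : 4*n+2 < f (2*n+1) := by
    have h1 := low (2*n+1) (by omega) (by omega)
    by_contra hcon
    have hset : (Finset.Icc 1 (4*n+2)).filter (fun j => 4*n+2 < f j)
        = Finset.Icc (2*n+2) (4*n+2) := by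
      ext j
      simp only [Finset.mem_filter, Finset.mem_Icc]
      constructor
      · rintro ⟨⟨h2, h3⟩, h4⟩
        refine ⟨?_, h3⟩
        by_contra h5
        rcases (show j ≤ 2*n+1 by omega).eq_or_lt with rfl | h6
        · omega
        · have := lt h2 h6 (by omega)
          omega
      · rintro ⟨h2, h3⟩
        have := low j (by omega) h3
        omega
    rw [hset, Nat.card_Icc] at heven
    obtain ⟨r, hr⟩ := heven
    omega
  have hsmall : smallSet n e (2*k) = setB n ∪ {f (2*n-1), f (2*n)} := by
    ext x
    simp only [smallSet, setB, hf, Finset.mem_image, Finset.mem_filter, Finset.mem_Icc,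
      Finset.mem_union, Finset.mem_insert, Finset.mem_singleton]
    constructor
    · rintro ⟨j, ⟨⟨h1, h2⟩, h3⟩, rfl⟩
      have h4 : j ≤ 2*n := by
        by_contra h5
        rcases (show 2*n+1 ≤ j by omega).eq_or_lt with rfl | h6
        · omega
        · have := lt (by omega) h6 h2
          omega
      rcases (show j ≤ 2*n-2 ∨ j = 2*n-1 ∨ j = 2*n by omega) with h | rfl | rfl
      · have := hB j h1 h
        left
        omega
      · exact Or.inr (Or.inl rfl)
      · exact Or.inr (Or.inr rfl)
    · rintro (⟨⟨h1, h2⟩, r, rfl⟩ | rfl | rfl)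
      · have := hB r (by omega) (by omega)
        exact ⟨r, by omega, this⟩
      · exact ⟨2*n-1, by omega, rfl⟩
      · exact ⟨2*n, by omega, rfl⟩
  rw [hsmall]
  rcases ha with ha | ha <;> rcases hb with hb | hb | hb <;> rw [ha, hb] <;> simp
end
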